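/- arXiv:1907.00064 — 2 statements merged into one kernel-verified Lean document; each statement's English description precedes it below -/
import Mathlib

section
/- Suppose v_xc : [0,∞) → ℝ satisfies |v_xc(t)| ≤ c_xc(1 + t^{p−1}) for some p ∈ [1, 5/3) and c_xc > 0. Then for all nonnegative ρ ∈ L^p(ℝ³) and all ψ with ρ_ψ = |ψ|² ∈ L¹(ℝ³) ∩ L³(ℝ³): ∫ v_xc(ρ) ρ_ψ ≥ −c_xc(‖ρ_ψ‖₁ + ‖ρ‖_p^{p−1} ‖ρ_ψ‖₁^{(3−p)/(2p)} ‖ρ_ψ‖₃^{3(p−1)/(2p)}). Moreover (Φ, χ) ↦ ∫ v_xc(ρ)|χ|² (with ρ = 2∑|φₖ|²) is continuous on L^{2p}(ℝ³)ⁿ × (L²(ℝ³) ∩ L^{2p}(ℝ³)). -/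
open MeasureTheory Real Filter Set
noncomputable section

/-- Physical space `ℝ³`. -/
abbrev E3 : Type := EuclideanSpace ℝ (Fin 3)

/-- `Lᵖ` norm (for `0 < p < ∞`). -/
def lpnorm (p : ℝ) (ρ : E3 → ℝ) : ℝ := (∫ x, |ρ x| ^ p) ^ (1/p)

/-- electron density `ρ = 2 ∑ₖ |φₖ|²`. -/
def dens {n : ℕ} (Φ : Fin n → E3 → ℝ) (x : E3) : ℝ := 2 * ∑ k, (Φ k x) ^ 2

/-! For the bound, the growth condition gives `|v(ρ) g| ≤ c (|g| + |ρ|^(p-1) |g|)`. Hölder's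
inequality with exponents `p / (p - 1)` and `p` bounds the second term by `‖ρ‖_p^(p-1) ‖g‖_p`, and
`‖g‖_p` is interpolated between `‖g‖₁` and `‖g‖₃`.

For continuity, convergence of the orbitals in `L^(2p)` gives convergence of the densities `ρ` in
`L^p`, and of `g = χ²` in `L¹ ∩ L^p`. By convexity of `t ↦ t^p`, the difference
`|v(ρ_m) g_m - v(ρ) g|` is at most a term whose integral tends to `0` plus a fixed integrable
function. Along a subsequence converging almost everywhere the difference tends to `0` pointwise,
so dominated convergence applies after truncating away the vanishing term. -/

open scoped ENNReal Topology

section Interpolation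

variable {α E : Type*} [MeasurableSpace α] {μ : Measure α} [NormedAddCommGroup E]

theorem eLpNorm_le_rpow_mul_rpow {p q r : ℝ≥0∞} {s t : ℝ} (hs : 0 ≤ s) (ht : 0 ≤ t)
    (hst : s + t = 1) (hr : r⁻¹ = ENNReal.ofReal s * p⁻¹ + ENNReal.ofReal t * q⁻¹) {f : α → E}
    (hf : AEStronglyMeasurable f μ) :
    eLpNorm f r μ ≤ eLpNorm f p μ ^ s * eLpNorm f q μ ^ t := by
  rcases hs.eq_or_lt with rfl | hs
  · obtain rfl : t = 1 := by linarith
    obtain rfl : r = q := by simpa using hr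
    simp
  rcases ht.eq_or_lt with rfl | ht
  · obtain rfl : s = 1 := by linarith
    obtain rfl : r = p := by simpa using hr
    simp
  have hinv (e : ℝ≥0∞) {u : ℝ} (hu : 0 < u) :
      (e / ENNReal.ofReal u)⁻¹ = ENNReal.ofReal u * e⁻¹ := by
    rw [ENNReal.inv_div (.inl ENNReal.ofReal_ne_top) (.inl (ENNReal.ofReal_pos.2 hu).ne'),
      div_eq_mul_inv]
  have hpow (e : ℝ≥0∞) {u : ℝ} (hu : 0 < u) :
      eLpNorm (fun x => ‖f x‖ ^ u) (e / ENNReal.ofReal u) μ = eLpNorm f e μ ^ u := by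
    rw [eLpNorm_norm_rpow f hu,
      ENNReal.div_mul_cancel (ENNReal.ofReal_pos.2 hu).ne' ENNReal.ofReal_ne_top]
  have : ENNReal.HolderTriple (p / ENNReal.ofReal s) (q / ENNReal.ofReal t) r :=
    ⟨by rw [hinv p hs, hinv q ht, hr]⟩
  have hmeas {u : ℝ} (hu : 0 < u) : AEStronglyMeasurable (fun x => ‖f x‖ ^ u) μ :=
    (Real.continuous_rpow_const hu.le).comp_aestronglyMeasurable hf.norm
  calc eLpNorm f r μ
      = eLpNorm ((fun x => ‖f x‖ ^ s) • fun x => ‖f x‖ ^ t) r μ := by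
        refine eLpNorm_congr_norm_ae (.of_forall fun x => ?_)
        rw [Pi.smul_apply', smul_eq_mul, ← rpow_add_of_nonneg (norm_nonneg _) hs.le ht.le, hst,
          rpow_one, norm_norm]
    _ ≤ _ := eLpNorm_smul_le_mul_eLpNorm (hmeas ht) (hmeas hs)
    _ = eLpNorm f p μ ^ s * eLpNorm f q μ ^ t := by rw [hpow p hs, hpow q ht]

theorem lintegral_enorm_rpow_eq {p : ℝ} (hp : 0 < p) (f : α → E) :
    ∫⁻ x, ‖f x‖ₑ ^ p ∂μ = eLpNorm f (ENNReal.ofReal p) μ ^ p := by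
  rw [eLpNorm_eq_eLpNorm' (ENNReal.ofReal_pos.2 hp).ne' ENNReal.ofReal_ne_top,
    ENNReal.toReal_ofReal hp.le, lintegral_rpow_enorm_eq_rpow_eLpNorm' hp]

end Interpolation

section PolynomialGrowth

variable {α E F : Type*} [MeasurableSpace α] {μ : Measure α} [NormedAddCommGroup E]
  [NormedAddCommGroup F] {p : ℝ}

theorem lintegral_enorm_rpow_sub_one_mul_le (hp : 1 ≤ p) {f : α → E} {g : α → F}
    (hf : AEStronglyMeasurable f μ) (hg : AEStronglyMeasurable g μ) :
    ∫⁻ x, ‖f x‖ₑ ^ (p - 1) * ‖g x‖ₑ ∂μ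
      ≤ eLpNorm f (ENNReal.ofReal p) μ ^ (p - 1) * eLpNorm g (ENNReal.ofReal p) μ := by
  have hp0 : 0 < p := by linarith
  have hf_exp : p * ((p - 1) / p) = p - 1 := by field_simp
  have hg_exp : p * (1 / p) = 1 := by field_simp
  have key := ENNReal.lintegral_mul_norm_pow_le (hf.enorm.pow_const p) (hg.enorm.pow_const p)
    (div_nonneg (sub_nonneg.2 hp) hp0.le) (one_div_nonneg.2 hp0.le) (by field_simp; ring)
  simpa only [lintegral_enorm_rpow_eq hp0, ← ENNReal.rpow_mul, hf_exp, hg_exp, ENNReal.rpow_one]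
    using key

theorem enorm_le_of_norm_le_mul_one_add_rpow {a : E} {b : F} {c s : ℝ} (hs : 0 ≤ s)
    (h : ‖a‖ ≤ c * (1 + ‖b‖ ^ s)) : ‖a‖ₑ ≤ ENNReal.ofReal c * (1 + ‖b‖ₑ ^ s) := by
  rw [← ofReal_norm, ← ofReal_norm, ENNReal.ofReal_rpow_of_nonneg (norm_nonneg b) hs,
    ← ENNReal.ofReal_one, ← ENNReal.ofReal_add zero_le_one (by positivity),
    ← ENNReal.ofReal_mul' (by positivity)]
  exact ENNReal.ofReal_le_ofReal h

theorem lintegral_enorm_mul_le_of_growth (hp : 1 ≤ p) {C : ℝ≥0∞} {f : α → E} {w g : α → ℝ}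
    (hf : AEStronglyMeasurable f μ) (hg : AEStronglyMeasurable g μ)
    (hw : ∀ x, ‖w x‖ₑ ≤ C * (1 + ‖f x‖ₑ ^ (p - 1))) :
    ∫⁻ x, ‖w x * g x‖ₑ ∂μ
      ≤ C * (eLpNorm g 1 μ
        + eLpNorm f (ENNReal.ofReal p) μ ^ (p - 1) * eLpNorm g (ENNReal.ofReal p) μ) := by
  calc ∫⁻ x, ‖w x * g x‖ₑ ∂μ
      ≤ ∫⁻ x, C * (‖g x‖ₑ + ‖f x‖ₑ ^ (p - 1) * ‖g x‖ₑ) ∂μ := by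
        refine lintegral_mono fun x => ?_
        grw [enorm_mul, hw x, mul_assoc, add_mul, one_mul]
    _ = C * (eLpNorm g 1 μ + ∫⁻ x, ‖f x‖ₑ ^ (p - 1) * ‖g x‖ₑ ∂μ) := by
        have hfg : AEMeasurable (fun x => ‖f x‖ₑ ^ (p - 1) * ‖g x‖ₑ) μ :=
          (hf.enorm.pow_const _).mul hg.enorm
        have hsum : AEMeasurable (fun x => ‖g x‖ₑ + ‖f x‖ₑ ^ (p - 1) * ‖g x‖ₑ) μ :=
          hg.enorm.add hfg
        rw [lintegral_const_mul'' _ hsum, lintegral_add_left' hg.enorm,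
          eLpNorm_one_eq_lintegral_enorm]
    _ ≤ _ := by grw [lintegral_enorm_rpow_sub_one_mul_le hp hf hg]

theorem rpow_sub_one_mul_le_rpow_add_rpow (hp : 1 ≤ p) (a b : ℝ≥0∞) :
    a ^ (p - 1) * b ≤ b ^ p + a ^ p := by
  have hpow (c : ℝ≥0∞) : c ^ (p - 1) * c = c ^ p := by
    simpa using (ENNReal.rpow_add_of_nonneg (x := c) (p - 1) 1 (sub_nonneg.2 hp) zero_le_one).symm
  rcases le_total a b with hab | hba
  · calc a ^ (p - 1) * b ≤ b ^ (p - 1) * b := by gcongr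
      _ ≤ b ^ p + a ^ p := hpow b ▸ le_self_add
  · calc a ^ (p - 1) * b ≤ a ^ (p - 1) * a := by gcongr
      _ ≤ b ^ p + a ^ p := hpow a ▸ le_add_self

/-- The gauge `|s| + |s|ᵖ + ‖y‖ᵖ`, a dominating function for `w y * s` when `w` has growth `p - 1`.
Along `(y, s) = (f x, g x)` it is integrable as soon as `f ∈ Lᵖ` and `g ∈ L¹ ∩ Lᵖ`. It takes values
in `ℝ≥0∞`, so that its integral makes sense before finiteness is known. -/
def growthGauge (p : ℝ) (y : E) (s : ℝ) : ℝ≥0∞ := ‖s‖ₑ + ‖s‖ₑ ^ p + ‖y‖ₑ ^ p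

theorem enorm_mul_le_growthGauge (hp : 1 ≤ p) {C : ℝ≥0∞} {y : E} {r : ℝ}
    (hr : ‖r‖ₑ ≤ C * (1 + ‖y‖ₑ ^ (p - 1))) (s : ℝ) : ‖r * s‖ₑ ≤ C * growthGauge p y s := by
  grw [enorm_mul, hr, mul_assoc, add_mul, one_mul, rpow_sub_one_mul_le_rpow_add_rpow hp,
    ← add_assoc, growthGauge]

theorem enorm_rpow_le_sub_add (hp : 1 ≤ p) (a b : E) :
    ‖a‖ₑ ^ p ≤ 2 ^ (p - 1) * (‖a - b‖ₑ ^ p + ‖b‖ₑ ^ p) :=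
  calc ‖a‖ₑ ^ p ≤ (‖a - b‖ₑ + ‖b‖ₑ) ^ p := by
        gcongr
        simpa using enorm_add_le (a - b) b
    _ ≤ 2 ^ (p - 1) * (‖a - b‖ₑ ^ p + ‖b‖ₑ ^ p) :=
        ENNReal.rpow_add_le_mul_rpow_add_rpow _ _ hp

theorem growthGauge_le_sub_add (hp : 1 ≤ p) (y y' : E) (s s' : ℝ) :
    growthGauge p y s ≤ 2 ^ (p - 1) * (growthGauge p (y - y') (s - s') + growthGauge p y' s') := by
  have hone : (1 : ℝ≥0∞) ≤ 2 ^ (p - 1) := by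
    simpa using ENNReal.rpow_le_rpow_of_exponent_le one_le_two (sub_nonneg.2 hp)
  have hlin : ‖s‖ₑ ≤ 2 ^ (p - 1) * (‖s - s'‖ₑ + ‖s'‖ₑ) := by
    grw [← hone, one_mul]
    simpa using enorm_add_le (s - s') s'
  exact (add_le_add (add_le_add hlin (enorm_rpow_le_sub_add hp s s'))
    (enorm_rpow_le_sub_add hp y y')).trans_eq (by unfold growthGauge; ring)

theorem enorm_comp_mul_sub_le_growthGauge (hp : 1 ≤ p) {C : ℝ≥0∞} {w : E → ℝ}
    (hw : ∀ y, ‖w y‖ₑ ≤ C * (1 + ‖y‖ₑ ^ (p - 1))) (y y' : E) (s s' : ℝ) :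
    ‖w y * s - w y' * s'‖ₑ ≤ C * 2 ^ (p - 1) * growthGauge p (y - y') (s - s')
      + C * (2 ^ (p - 1) + 1) * growthGauge p y' s' :=
  calc ‖w y * s - w y' * s'‖ₑ ≤ C * growthGauge p y s + C * growthGauge p y' s' :=
        enorm_sub_le.trans (add_le_add (enorm_mul_le_growthGauge hp (hw y) s)
          (enorm_mul_le_growthGauge hp (hw y') s'))
    _ ≤ C * (2 ^ (p - 1) * (growthGauge p (y - y') (s - s') + growthGauge p y' s'))
          + C * growthGauge p y' s' := by grw [growthGauge_le_sub_add hp y y' s s']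
    _ = _ := by ring

theorem aemeasurable_growthGauge {f : α → E} {g : α → ℝ} (hf : AEStronglyMeasurable f μ)
    (hg : AEStronglyMeasurable g μ) : AEMeasurable (fun x => growthGauge p (f x) (g x)) μ :=
  (hg.enorm.add (hg.enorm.pow_const p)).add (hf.enorm.pow_const p)

theorem lintegral_growthGauge (hp : 0 < p) {f : α → E} {g : α → ℝ}
    (hg : AEStronglyMeasurable g μ) :
    ∫⁻ x, growthGauge p (f x) (g x) ∂μ
      = eLpNorm g 1 μ + eLpNorm g (ENNReal.ofReal p) μ ^ p
        + eLpNorm f (ENNReal.ofReal p) μ ^ p := by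
  have hsum : AEMeasurable (fun x => ‖g x‖ₑ + ‖g x‖ₑ ^ p) μ :=
    hg.enorm.add (hg.enorm.pow_const p)
  simp only [growthGauge]
  rw [lintegral_add_left' hsum, lintegral_add_left' hg.enorm,
    lintegral_enorm_rpow_eq hp, lintegral_enorm_rpow_eq hp, eLpNorm_one_eq_lintegral_enorm]

theorem lintegral_growthGauge_ne_top (hp : 0 < p) {f : α → E} {g : α → ℝ}
    (hf : MemLp f (ENNReal.ofReal p) μ) (hg₁ : MemLp g 1 μ) (hg : MemLp g (ENNReal.ofReal p) μ) :
    ∫⁻ x, growthGauge p (f x) (g x) ∂μ ≠ ∞ := by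
  rw [lintegral_growthGauge hp hg.1]
  have := hf.eLpNorm_ne_top
  have := hg₁.eLpNorm_ne_top
  have := hg.eLpNorm_ne_top
  finiteness

theorem tendsto_lintegral_growthGauge_zero (hp : 0 < p) {f : ℕ → α → E} {g : ℕ → α → ℝ}
    (hg : ∀ m, AEStronglyMeasurable (g m) μ)
    (hf_lim : Tendsto (fun m => eLpNorm (f m) (ENNReal.ofReal p) μ) atTop (𝓝 0))
    (hg₁_lim : Tendsto (fun m => eLpNorm (g m) 1 μ) atTop (𝓝 0))
    (hg_lim : Tendsto (fun m => eLpNorm (g m) (ENNReal.ofReal p) μ) atTop (𝓝 0)) :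
    Tendsto (fun m => ∫⁻ x, growthGauge p (f m x) (g m x) ∂μ) atTop (𝓝 0) := by
  have hpow {u : ℕ → ℝ≥0∞} (hu : Tendsto u atTop (𝓝 0)) :
      Tendsto (fun m => u m ^ p) atTop (𝓝 0) := by
    simpa only [ENNReal.zero_rpow_of_pos hp] using hu.ennrpow_const p
  simp only [lintegral_growthGauge hp (hg _)]
  simpa only [add_zero] using (hg₁_lim.add (hpow hg_lim)).add (hpow hf_lim)

theorem integrable_comp_mul_of_growth (hp : 1 ≤ p) {C : ℝ≥0∞} (hC : C ≠ ∞) {w : E → ℝ}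
    (hw : Continuous w) (hgrowth : ∀ y, ‖w y‖ₑ ≤ C * (1 + ‖y‖ₑ ^ (p - 1))) {f : α → E} {g : α → ℝ}
    (hf : MemLp f (ENNReal.ofReal p) μ) (hg₁ : MemLp g 1 μ) (hg : MemLp g (ENNReal.ofReal p) μ) :
    Integrable (fun x => w (f x) * g x) μ := by
  refine ⟨(hw.comp_aestronglyMeasurable hf.1).mul hg.1, ?_⟩
  calc ∫⁻ x, ‖w (f x) * g x‖ₑ ∂μ ≤ ∫⁻ x, C * growthGauge p (f x) (g x) ∂μ :=
        lintegral_mono fun x => enorm_mul_le_growthGauge hp (hgrowth (f x)) (g x)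
    _ = C * ∫⁻ x, growthGauge p (f x) (g x) ∂μ := lintegral_const_mul' _ _ hC
    _ < ∞ := ENNReal.mul_lt_top hC.lt_top
        (lintegral_growthGauge_ne_top (by linarith) hf hg₁ hg).lt_top

end PolynomialGrowth

section Convergence

variable {α E F : Type*} [MeasurableSpace α] {μ : Measure α} [NormedAddCommGroup E]
  [NormedAddCommGroup F]

theorem tendsto_lintegral_zero_of_le_add {D S : ℕ → α → ℝ≥0∞} {G : α → ℝ≥0∞}
    (hD : ∀ m, AEMeasurable (D m) μ) (hS : ∀ m, AEMeasurable (S m) μ) (hG : ∫⁻ x, G x ∂μ ≠ ∞)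
    (hle : ∀ m x, D m x ≤ S m x + G x) (hD_lim : ∀ᵐ x ∂μ, Tendsto (D · x) atTop (𝓝 0))
    (hS_lim : Tendsto (fun m => ∫⁻ x, S m x ∂μ) atTop (𝓝 0)) :
    Tendsto (fun m => ∫⁻ x, D m x ∂μ) atTop (𝓝 0) := by
  -- The truncated difference `D m - S m` is dominated by the fixed function `G`.
  have hsub : Tendsto (fun m => ∫⁻ x, D m x - S m x ∂μ) atTop (𝓝 (∫⁻ _, 0 ∂μ)) := by
    refine tendsto_lintegral_of_dominated_convergence' G (fun m => (hD m).sub (hS m))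
      (fun m => .of_forall fun x => tsub_le_iff_left.2 (hle m x)) hG ?_
    filter_upwards [hD_lim] with x hx
    exact tendsto_nhds_bot_mono' hx fun _ => tsub_le_self
  have hsum := hS_lim.add hsub
  rw [lintegral_zero, add_zero] at hsum
  refine tendsto_nhds_bot_mono' hsum fun m => ?_
  calc ∫⁻ x, D m x ∂μ ≤ ∫⁻ x, S m x + (D m x - S m x) ∂μ :=
        lintegral_mono fun x => le_add_tsub
    _ = ∫⁻ x, S m x ∂μ + ∫⁻ x, D m x - S m x ∂μ := lintegral_add_left' (hS m) _

theorem exists_subseq_tendsto_ae_of_tendsto_eLpNorm {p q : ℝ≥0∞} (hp : p ≠ 0) (hq : q ≠ 0)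
    {f : ℕ → α → E} {f' : α → E} {g : ℕ → α → F} {g' : α → F}
    (hf : ∀ m, AEStronglyMeasurable (f m) μ) (hf' : AEStronglyMeasurable f' μ)
    (hg : ∀ m, AEStronglyMeasurable (g m) μ) (hg' : AEStronglyMeasurable g' μ)
    (hf_lim : Tendsto (fun m => eLpNorm (f m - f') p μ) atTop (𝓝 0))
    (hg_lim : Tendsto (fun m => eLpNorm (g m - g') q μ) atTop (𝓝 0)) :
    ∃ ns : ℕ → ℕ, StrictMono ns ∧ ∀ᵐ x ∂μ, Tendsto (fun k => f (ns k) x) atTop (𝓝 (f' x)) ∧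
      Tendsto (fun k => g (ns k) x) atTop (𝓝 (g' x)) := by
  obtain ⟨ms, hms, hf_ae⟩ :=
    (tendstoInMeasure_of_tendsto_eLpNorm hp hf hf' hf_lim).exists_seq_tendsto_ae
  obtain ⟨ks, hks, hg_ae⟩ := ((tendstoInMeasure_of_tendsto_eLpNorm hq hg hg' hg_lim).comp
    hms.tendsto_atTop).exists_seq_tendsto_ae
  refine ⟨ms ∘ ks, hms.comp hks, ?_⟩
  filter_upwards [hf_ae, hg_ae] with x hfx hgx
  exact ⟨hfx.comp hks.tendsto_atTop, hgx⟩

theorem tendsto_lintegral_enorm_comp_mul_sub_of_growth {p : ℝ} (hp : 1 ≤ p) {C : ℝ≥0∞}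
    (hC : C ≠ ∞) {w : E → ℝ} (hw : Continuous w)
    (hgrowth : ∀ y, ‖w y‖ₑ ≤ C * (1 + ‖y‖ₑ ^ (p - 1)))
    {f : ℕ → α → E} {f' : α → E} {g : ℕ → α → ℝ} {g' : α → ℝ}
    (hf : ∀ m, AEStronglyMeasurable (f m) μ) (hf' : MemLp f' (ENNReal.ofReal p) μ)
    (hg : ∀ m, AEStronglyMeasurable (g m) μ) (hg₁' : MemLp g' 1 μ)
    (hg' : MemLp g' (ENNReal.ofReal p) μ)
    (hf_lim : Tendsto (fun m => eLpNorm (f m - f') (ENNReal.ofReal p) μ) atTop (𝓝 0))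
    (hg₁_lim : Tendsto (fun m => eLpNorm (g m - g') 1 μ) atTop (𝓝 0))
    (hg_lim : Tendsto (fun m => eLpNorm (g m - g') (ENNReal.ofReal p) μ) atTop (𝓝 0)) :
    Tendsto (fun m => ∫⁻ x, ‖w (f m x) * g m x - w (f' x) * g' x‖ₑ ∂μ) atTop (𝓝 0) := by
  have hp0 : 0 < p := by linarith
  have hgauge_lim := tendsto_lintegral_growthGauge_zero hp0 (fun m => (hg m).sub hg'.1) hf_lim
    hg₁_lim hg_lim
  refine tendsto_of_subseq_tendsto fun ns hns => ?_
  obtain ⟨ms, hms, hae⟩ := exists_subseq_tendsto_ae_of_tendsto_eLpNorm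
    (ENNReal.ofReal_pos.2 hp0).ne' one_ne_zero (fun m => hf (ns m)) hf'.1 (fun m => hg (ns m))
    hg'.1 (hf_lim.comp hns) (hg₁_lim.comp hns)
  refine ⟨ms, tendsto_lintegral_zero_of_le_add
    (S := fun k x => C * 2 ^ (p - 1)
      * growthGauge p ((f (ns (ms k)) - f') x) ((g (ns (ms k)) - g') x))
    (G := fun x => C * (2 ^ (p - 1) + 1) * growthGauge p (f' x) (g' x)) (fun k => ?_)
    (fun k => (aemeasurable_growthGauge ((hf _).sub hf'.1) ((hg _).sub hg'.1)).const_mul _) ?_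
    (fun k x => enorm_comp_mul_sub_le_growthGauge hp hgrowth _ _ _ _) ?_ ?_⟩
  · exact (((hw.comp_aestronglyMeasurable (hf _)).mul (hg _)).sub
      ((hw.comp_aestronglyMeasurable hf'.1).mul hg'.1)).enorm
  · rw [lintegral_const_mul' _ _ (by finiteness)]
    exact ENNReal.mul_ne_top (by finiteness) (lintegral_growthGauge_ne_top hp0 hf' hg₁' hg')
  · filter_upwards [hae] with x ⟨hfx, hgx⟩
    simpa using ((((hw.tendsto _).comp hfx).mul hgx).sub_const (w (f' x) * g' x)).enorm
  · simp only [lintegral_const_mul' _ _ (show C * 2 ^ (p - 1) ≠ ∞ by finiteness)]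
    simpa using ENNReal.Tendsto.const_mul (hgauge_lim.comp (hns.comp hms.tendsto_atTop))
      (.inr (show C * 2 ^ (p - 1) ≠ ∞ by finiteness))

theorem tendsto_integral_comp_mul_of_growth {p : ℝ} (hp : 1 ≤ p) {C : ℝ≥0∞} (hC : C ≠ ∞)
    {w : E → ℝ} (hw : Continuous w) (hgrowth : ∀ y, ‖w y‖ₑ ≤ C * (1 + ‖y‖ₑ ^ (p - 1)))
    {f : ℕ → α → E} {f' : α → E} {g : ℕ → α → ℝ} {g' : α → ℝ}
    (hf : ∀ m, MemLp (f m) (ENNReal.ofReal p) μ) (hf' : MemLp f' (ENNReal.ofReal p) μ)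
    (hg₁ : ∀ m, MemLp (g m) 1 μ) (hg : ∀ m, MemLp (g m) (ENNReal.ofReal p) μ)
    (hg₁' : MemLp g' 1 μ) (hg' : MemLp g' (ENNReal.ofReal p) μ)
    (hf_lim : Tendsto (fun m => eLpNorm (f m - f') (ENNReal.ofReal p) μ) atTop (𝓝 0))
    (hg₁_lim : Tendsto (fun m => eLpNorm (g m - g') 1 μ) atTop (𝓝 0))
    (hg_lim : Tendsto (fun m => eLpNorm (g m - g') (ENNReal.ofReal p) μ) atTop (𝓝 0)) :
    Tendsto (fun m => ∫ x, w (f m x) * g m x ∂μ) atTop (𝓝 (∫ x, w (f' x) * g' x ∂μ)) :=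
  tendsto_integral_of_L1 _
    ((hw.comp_aestronglyMeasurable hf'.1).mul hg'.1)
    (.of_forall fun m => integrable_comp_mul_of_growth hp hC hw hgrowth (hf m) (hg₁ m) (hg m))
    (tendsto_lintegral_enorm_comp_mul_sub_of_growth hp hC hw hgrowth (fun m => (hf m).1) hf'
      (fun m => (hg m).1) hg₁' hg' hf_lim hg₁_lim hg_lim)

end Convergence

section Squares

variable {α : Type*} [MeasurableSpace α] {μ : Measure α}

theorem holderTriple_two_mul {p : ℝ} (hp : 0 < p) :
    ENNReal.HolderTriple (ENNReal.ofReal (2 * p)) (ENNReal.ofReal (2 * p)) (ENNReal.ofReal p) :=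
  Real.HolderTriple.ennrealOfReal ⟨by field_simp; norm_num, by positivity, by positivity⟩

theorem memLp_sq {p q : ℝ≥0∞} [ENNReal.HolderTriple q q p] {f : α → ℝ} (hf : MemLp f q μ) :
    MemLp (f ^ 2) p μ :=
  sq f ▸ hf.mul hf

theorem eLpNorm_two_smul (f : α → ℝ) (p : ℝ≥0∞) :
    eLpNorm ((2 : ℝ) • f) p μ = 2 * eLpNorm f p μ := by
  rw [eLpNorm_const_smul, Real.enorm_eq_ofReal zero_le_two, ENNReal.ofReal_ofNat]

theorem eLpNorm_sq_sub_sq_le {p q : ℝ≥0∞} [ENNReal.HolderTriple q q p] (hq : 1 ≤ q)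
    {f g : α → ℝ} (hf : AEStronglyMeasurable f μ) (hg : AEStronglyMeasurable g μ) :
    eLpNorm (f ^ 2 - g ^ 2) p μ
      ≤ eLpNorm (f - g) q μ * (eLpNorm (f - g) q μ + 2 * eLpNorm g q μ) := by
  have hfactor : f ^ 2 - g ^ 2 = (f - g) • ((f - g) + (2 : ℝ) • g) := by
    ext x
    simp only [Pi.smul_apply', Pi.add_apply, Pi.sub_apply, Pi.pow_apply, Pi.smul_apply,
      smul_eq_mul]
    ring
  calc eLpNorm (f ^ 2 - g ^ 2) p μ
      ≤ eLpNorm (f - g) q μ * eLpNorm ((f - g) + (2 : ℝ) • g) q μ :=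
        hfactor ▸ eLpNorm_smul_le_mul_eLpNorm ((hf.sub hg).add (hg.const_smul _)) (hf.sub hg)
    _ ≤ eLpNorm (f - g) q μ * (eLpNorm (f - g) q μ + 2 * eLpNorm g q μ) := by
        grw [eLpNorm_add_le (hf.sub hg) (hg.const_smul _) hq, eLpNorm_two_smul]

theorem tendsto_eLpNorm_sq_sub_sq {p q : ℝ≥0∞} [ENNReal.HolderTriple q q p] (hq : 1 ≤ q)
    {f : ℕ → α → ℝ} {f' : α → ℝ} (hf : ∀ m, AEStronglyMeasurable (f m) μ) (hf' : MemLp f' q μ)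
    (hlim : Tendsto (fun m => eLpNorm (f m - f') q μ) atTop (𝓝 0)) :
    Tendsto (fun m => eLpNorm (f m ^ 2 - f' ^ 2) p μ) atTop (𝓝 0) := by
  have hfin : 2 * eLpNorm f' q μ ≠ ∞ := ENNReal.mul_ne_top ENNReal.ofNat_ne_top hf'.eLpNorm_ne_top
  have hbound : Tendsto (fun m => eLpNorm (f m - f') q μ *
      (eLpNorm (f m - f') q μ + 2 * eLpNorm f' q μ)) atTop (𝓝 0) := by
    simpa using ENNReal.Tendsto.mul hlim (.inr (by simpa using hfin)) (hlim.add_const _)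
      (.inr ENNReal.zero_ne_top)
  exact tendsto_nhds_bot_mono' hbound fun m => eLpNorm_sq_sub_sq_le hq (hf m) hf'.1

end Squares

section OrbitalDensity

variable {α ι : Type*} [Fintype ι]

/-- The electron density `2 ∑ₖ |φₖ|²` of a finite family of doubly occupied orbitals, extending
`dens` to an arbitrary domain and an arbitrary index type. -/
def orbitalDensity (Φ : ι → α → ℝ) (x : α) : ℝ := 2 * ∑ k, Φ k x ^ 2

theorem orbitalDensity_nonneg (Φ : ι → α → ℝ) (x : α) : 0 ≤ orbitalDensity Φ x :=
  mul_nonneg zero_le_two (Finset.sum_nonneg fun k _ => sq_nonneg (Φ k x))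

variable [MeasurableSpace α] {μ : Measure α}

theorem memLp_orbitalDensity {p q : ℝ≥0∞} [ENNReal.HolderTriple q q p] {Φ : ι → α → ℝ}
    (hΦ : ∀ k, MemLp (Φ k) q μ) : MemLp (orbitalDensity Φ) p μ :=
  (memLp_finsetSum Finset.univ fun k _ => memLp_sq (hΦ k)).const_mul 2

theorem tendsto_eLpNorm_orbitalDensity_sub {p q : ℝ≥0∞} [ENNReal.HolderTriple q q p] (hp : 1 ≤ p)
    (hq : 1 ≤ q) {Φ : ℕ → ι → α → ℝ} {Φ' : ι → α → ℝ}
    (hΦ : ∀ m k, AEStronglyMeasurable (Φ m k) μ) (hΦ' : ∀ k, MemLp (Φ' k) q μ)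
    (hlim : ∀ k, Tendsto (fun m => eLpNorm (Φ m k - Φ' k) q μ) atTop (𝓝 0)) :
    Tendsto (fun m => eLpNorm (orbitalDensity (Φ m) - orbitalDensity Φ') p μ) atTop (𝓝 0) := by
  have hdiff (m : ℕ) : orbitalDensity (Φ m) - orbitalDensity Φ'
      = (2 : ℝ) • ∑ k, (Φ m k ^ 2 - Φ' k ^ 2) := by
    ext x
    simp [orbitalDensity, mul_sub]
  have hle (m : ℕ) : eLpNorm (orbitalDensity (Φ m) - orbitalDensity Φ') p μ
      ≤ 2 * ∑ k, eLpNorm (Φ m k ^ 2 - Φ' k ^ 2) p μ := by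
    grw [hdiff, eLpNorm_two_smul,
      eLpNorm_sum_le (fun k _ => ((hΦ m k).pow 2).sub ((hΦ' k).1.pow 2)) hp]
  have hbound : Tendsto (fun m => 2 * ∑ k, eLpNorm (Φ m k ^ 2 - Φ' k ^ 2) p μ)
      atTop (𝓝 0) := by
    simpa using ENNReal.Tendsto.const_mul (tendsto_finsetSum Finset.univ fun k _ =>
      tendsto_eLpNorm_sq_sub_sq (p := p) hq (hΦ · k) (hΦ' k) (hlim k))
      (.inr (ENNReal.ofNat_ne_top (n := 2)))
  exact tendsto_nhds_bot_mono' hbound hle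

end OrbitalDensity

section RealLpNorm

variable {α : Type*} [MeasurableSpace α] {μ : Measure α} {q : ℝ} {f : α → ℝ}

/-- The `L^q(μ)` norm written as a real integral, extending `lpnorm` to an arbitrary measure space.
Since the integral is a Bochner integral, it is `0` when `|f|^q` is not integrable. -/
def realLpNorm (μ : Measure α) (q : ℝ) (f : α → ℝ) : ℝ := (∫ x, |f x| ^ q ∂μ) ^ (1 / q)

theorem realLpNorm_eq_toReal_eLpNorm (hq : 0 < q) (hf : AEStronglyMeasurable f μ) :
    realLpNorm μ q f = (eLpNorm f (ENNReal.ofReal q) μ).toReal := by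
  rw [toReal_eLpNorm hf, lpNorm_eq_integral_norm_rpow_toReal (ENNReal.ofReal_pos.2 hq).ne'
    ENNReal.ofReal_ne_top hf, ENNReal.toReal_ofReal hq.le, realLpNorm, one_div]
  rfl

theorem tendsto_eLpNorm_sub_of_tendsto_realLpNorm {f : ℕ → α → ℝ} {f' : α → ℝ} (hq : 0 < q)
    (hf : ∀ m, MemLp (f m) (ENNReal.ofReal q) μ) (hf' : MemLp f' (ENNReal.ofReal q) μ)
    (hlim : Tendsto (fun m => realLpNorm μ q fun x => f m x - f' x) atTop (𝓝 0)) :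
    Tendsto (fun m => eLpNorm (f m - f') (ENNReal.ofReal q) μ) atTop (𝓝 0) := by
  have htop (m : ℕ) := ((hf m).sub hf').eLpNorm_ne_top
  refine (ENNReal.tendsto_toReal_zero_iff htop).1 (hlim.congr fun m => ?_)
  exact realLpNorm_eq_toReal_eLpNorm hq ((hf m).sub hf').1

theorem memLp_of_integrable_abs_rpow (hq : 0 < q) (hf : AEStronglyMeasurable f μ)
    (hint : Integrable (fun x => |f x| ^ q) μ) : MemLp f (ENNReal.ofReal q) μ := by
  refine (integrable_norm_rpow_iff hf (ENNReal.ofReal_pos.2 hq).ne' ENNReal.ofReal_ne_top).1 ?_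
  simpa only [ENNReal.toReal_ofReal hq.le, Real.norm_eq_abs] using hint

theorem aestronglyMeasurable_of_abs_rpow_of_nonneg (hq : 0 < q) (hf : ∀ x, 0 ≤ f x)
    (hmeas : AEStronglyMeasurable (fun x => |f x| ^ q) μ) : AEStronglyMeasurable f μ := by
  have hroot : (fun x => (|f x| ^ q) ^ q⁻¹) = f := by
    ext x
    rw [abs_of_nonneg (hf x), rpow_rpow_inv (hf x) hq.ne']
  exact hroot ▸ (Real.continuous_rpow_const (inv_nonneg.2 hq.le)).comp_aestronglyMeasurable hmeas

end RealLpNorm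

section Bound

variable {α : Type*} [MeasurableSpace α] {μ : Measure α} {p : ℝ}

theorem eLpNorm_le_eLpNorm_one_rpow_mul_eLpNorm_three_rpow (hp : 1 ≤ p) (hp₃ : p ≤ 3) {g : α → ℝ}
    (hg : AEStronglyMeasurable g μ) :
    eLpNorm g (ENNReal.ofReal p) μ
      ≤ eLpNorm g 1 μ ^ ((3 - p) / (2 * p)) * eLpNorm g 3 μ ^ (3 * (p - 1) / (2 * p)) := by
  have hp0 : 0 < p := by linarith
  have hs : 0 ≤ (3 - p) / (2 * p) := div_nonneg (by linarith) (by positivity)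
  have ht : 0 ≤ 3 * (p - 1) / (2 * p) := div_nonneg (by linarith) (by positivity)
  refine eLpNorm_le_rpow_mul_rpow hs ht (by field_simp; ring) ?_ hg
  have hthree : (3 : ℝ≥0∞)⁻¹ = ENNReal.ofReal 3⁻¹ := by
    rw [ENNReal.ofReal_inv_of_pos three_pos, ENNReal.ofReal_ofNat]
  rw [inv_one, mul_one, hthree, ← ENNReal.ofReal_inv_of_pos hp0, ← ENNReal.ofReal_mul ht,
    ← ENNReal.ofReal_add hs (by positivity)]
  congr 1
  field_simp
  ring

theorem abs_integral_mul_le_of_growth {c : ℝ} (hc : 0 ≤ c) (hp : 1 ≤ p) (hp₃ : p ≤ 3)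
    {w f g : α → ℝ} (hw : ∀ x, |w x| ≤ c * (1 + |f x| ^ (p - 1)))
    (hf : MemLp f (ENNReal.ofReal p) μ) (hg₁ : MemLp g 1 μ) (hg₃ : MemLp g 3 μ) :
    |∫ x, w x * g x ∂μ| ≤ c * ((eLpNorm g 1 μ).toReal
      + (eLpNorm f (ENNReal.ofReal p) μ).toReal ^ (p - 1)
        * (eLpNorm g 1 μ).toReal ^ ((3 - p) / (2 * p))
        * (eLpNorm g 3 μ).toReal ^ (3 * (p - 1) / (2 * p))) := by
  have hbound : ‖∫ x, w x * g x ∂μ‖ₑ ≤ ENNReal.ofReal c * (eLpNorm g 1 μ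
      + eLpNorm f (ENNReal.ofReal p) μ ^ (p - 1)
        * eLpNorm g 1 μ ^ ((3 - p) / (2 * p)) * eLpNorm g 3 μ ^ (3 * (p - 1) / (2 * p))) := by
    grw [enorm_integral_le_lintegral_enorm, lintegral_enorm_mul_le_of_growth hp hf.1 hg₁.1
      fun x => enorm_le_of_norm_le_mul_one_add_rpow (sub_nonneg.2 hp) (hw x),
      eLpNorm_le_eLpNorm_one_rpow_mul_eLpNorm_three_rpow hp hp₃ hg₁.1, mul_assoc (_ ^ (p - 1))]
  have hs : 0 ≤ (3 - p) / (2 * p) := div_nonneg (by linarith) (by positivity)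
  have ht : 0 ≤ 3 * (p - 1) / (2 * p) := div_nonneg (by linarith) (by positivity)
  have hp' : 0 ≤ p - 1 := sub_nonneg.2 hp
  have := hf.eLpNorm_ne_top
  have := hg₁.eLpNorm_ne_top
  have := hg₃.eLpNorm_ne_top
  have hreal := ENNReal.toReal_mono (by finiteness) hbound
  rw [toReal_enorm, Real.norm_eq_abs, ENNReal.toReal_mul, ENNReal.toReal_ofReal hc,
    ENNReal.toReal_add (by finiteness) (by finiteness)] at hreal
  simpa only [ENNReal.toReal_mul, ENNReal.toReal_rpow] using hreal

end Bound

section ExchangeTerm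

variable {α ι : Type*} [MeasurableSpace α] {μ : Measure α} {v : ℝ → ℝ} {c p : ℝ}

theorem nonneg_of_growth (hv : ∀ t ≥ (0 : ℝ), |v t| ≤ c * (1 + t ^ (p - 1))) : 0 ≤ c := by
  have h := (abs_nonneg _).trans (hv 1 zero_le_one)
  rw [one_rpow] at h
  linarith

theorem abs_integral_comp_mul_le_of_growth (hp : 1 ≤ p) (hp₃ : p ≤ 3)
    (hv : ∀ t ≥ (0 : ℝ), |v t| ≤ c * (1 + t ^ (p - 1))) {ρ g : α → ℝ} (hρ : ∀ x, 0 ≤ ρ x)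
    (hρ_int : Integrable (fun x => |ρ x| ^ p) μ) (hg : Integrable g μ)
    (hg₃ : Integrable (fun x => |g x| ^ (3 : ℝ)) μ) :
    |∫ x, v (ρ x) * g x ∂μ| ≤ c * (realLpNorm μ 1 g
      + realLpNorm μ p ρ ^ (p - 1) * realLpNorm μ 1 g ^ ((3 - p) / (2 * p))
        * realLpNorm μ 3 g ^ (3 * (p - 1) / (2 * p))) := by
  have hp0 : 0 < p := by linarith
  have hρ_meas := aestronglyMeasurable_of_abs_rpow_of_nonneg hp0 hρ hρ_int.1
  have hg₃_memLp := memLp_of_integrable_abs_rpow three_pos hg.1 hg₃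
  rw [realLpNorm_eq_toReal_eLpNorm one_pos hg.1, realLpNorm_eq_toReal_eLpNorm three_pos hg.1,
    realLpNorm_eq_toReal_eLpNorm hp0 hρ_meas, ENNReal.ofReal_one, ENNReal.ofReal_ofNat]
  rw [ENNReal.ofReal_ofNat] at hg₃_memLp
  refine abs_integral_mul_le_of_growth (nonneg_of_growth hv) hp hp₃ (fun x => ?_)
    (memLp_of_integrable_abs_rpow hp0 hρ_meas hρ_int) (memLp_one_iff_integrable.2 hg) hg₃_memLp
  rw [abs_of_nonneg (hρ x)]
  exact hv _ (hρ x)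

theorem tendsto_integral_comp_orbitalDensity_mul_sq [Fintype ι] (hp : 1 ≤ p)
    (hcont : ContinuousOn v (Ici 0)) (hv : ∀ t ≥ (0 : ℝ), |v t| ≤ c * (1 + t ^ (p - 1)))
    {Φ : ℕ → ι → α → ℝ} {Φ' : ι → α → ℝ} {χ : ℕ → α → ℝ} {χ' : α → ℝ}
    (hΦ : ∀ m k, MemLp (Φ m k) (ENNReal.ofReal (2 * p)) μ)
    (hΦ' : ∀ k, MemLp (Φ' k) (ENNReal.ofReal (2 * p)) μ)
    (hχ₂ : ∀ m, MemLp (χ m) 2 μ) (hχ : ∀ m, MemLp (χ m) (ENNReal.ofReal (2 * p)) μ)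
    (hχ₂' : MemLp χ' 2 μ) (hχ' : MemLp χ' (ENNReal.ofReal (2 * p)) μ)
    (hΦ_lim : ∀ k, Tendsto (fun m => eLpNorm (Φ m k - Φ' k) (ENNReal.ofReal (2 * p)) μ)
      atTop (𝓝 0))
    (hχ₂_lim : Tendsto (fun m => eLpNorm (χ m - χ') 2 μ) atTop (𝓝 0))
    (hχ_lim : Tendsto (fun m => eLpNorm (χ m - χ') (ENNReal.ofReal (2 * p)) μ) atTop (𝓝 0)) :
    Tendsto (fun m => ∫ x, v (orbitalDensity (Φ m) x) * χ m x ^ 2 ∂μ) atTop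
      (𝓝 (∫ x, v (orbitalDensity Φ' x) * χ' x ^ 2 ∂μ)) := by
  have := holderTriple_two_mul (p := p) (by linarith)
  have hp_one : 1 ≤ ENNReal.ofReal p := ENNReal.one_le_ofReal.2 hp
  have h2p_one : 1 ≤ ENNReal.ofReal (2 * p) := ENNReal.one_le_ofReal.2 (by linarith)
  have hgrowth (t : ℝ) : ‖v |t|‖ₑ ≤ ENNReal.ofReal c * (1 + ‖t‖ₑ ^ (p - 1)) :=
    enorm_le_of_norm_le_mul_one_add_rpow (sub_nonneg.2 hp) (hv |t| (abs_nonneg t))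
  have key := tendsto_integral_comp_mul_of_growth hp ENNReal.ofReal_ne_top
    (hcont.comp_continuous continuous_abs abs_nonneg) hgrowth
    (fun m => memLp_orbitalDensity (hΦ m)) (memLp_orbitalDensity hΦ')
    (fun m => memLp_sq (hχ₂ m)) (fun m => memLp_sq (hχ m)) (memLp_sq hχ₂') (memLp_sq hχ')
    (tendsto_eLpNorm_orbitalDensity_sub hp_one h2p_one (fun m k => (hΦ m k).1) hΦ' hΦ_lim)
    (tendsto_eLpNorm_sq_sub_sq one_le_two (fun m => (hχ₂ m).1) hχ₂' hχ₂_lim)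
    (tendsto_eLpNorm_sq_sub_sq h2p_one (fun m => (hχ m).1) hχ' hχ_lim)
  simpa only [Function.comp_apply, Pi.pow_apply, abs_of_nonneg (orbitalDensity_nonneg _ _)]
    using key

end ExchangeTerm

theorem vxc_term_bound_and_continuity_general {α : Type*} [MeasurableSpace α] (μ : Measure α)
    (vxc : ℝ → ℝ) (c_xc p : ℝ) (hp : 1 ≤ p) (hvxcCont : ContinuousOn vxc (Ici 0))
    (hvxcGrow : ∀ t ≥ (0 : ℝ), |vxc t| ≤ c_xc * (1 + t ^ (p - 1))) :
    (p ≤ 3 → ∀ ρ ψ : α → ℝ, (∀ x, 0 ≤ ρ x) → Integrable (fun x => |ρ x| ^ p) μ →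
      Integrable (fun x => ψ x ^ 2) μ → Integrable (fun x => ψ x ^ 6) μ →
      (∫ x, vxc (ρ x) * ψ x ^ 2 ∂μ) ≥ -c_xc * (realLpNorm μ 1 (fun x => ψ x ^ 2)
        + realLpNorm μ p ρ ^ (p - 1) * realLpNorm μ 1 (fun x => ψ x ^ 2) ^ ((3 - p) / (2 * p))
          * realLpNorm μ 3 (fun x => ψ x ^ 2) ^ (3 * (p - 1) / (2 * p)))) ∧
    (∀ (n : ℕ) (Φm : ℕ → Fin n → α → ℝ) (Φ : Fin n → α → ℝ) (χm : ℕ → α → ℝ) (χ : α → ℝ),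
      (∀ m i, MemLp (Φm m i) (ENNReal.ofReal (2 * p)) μ) →
      (∀ i, MemLp (Φ i) (ENNReal.ofReal (2 * p)) μ) →
      (∀ m, MemLp (χm m) 2 μ) → (∀ m, MemLp (χm m) (ENNReal.ofReal (2 * p)) μ) →
      MemLp χ 2 μ → MemLp χ (ENNReal.ofReal (2 * p)) μ →
      (∀ i, Tendsto (fun m => realLpNorm μ (2 * p) fun x => Φm m i x - Φ i x) atTop (𝓝 0)) →
      Tendsto (fun m => realLpNorm μ 2 fun x => χm m x - χ x) atTop (𝓝 0) →
      Tendsto (fun m => realLpNorm μ (2 * p) fun x => χm m x - χ x) atTop (𝓝 0) →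
      Tendsto (fun m => ∫ x, vxc (orbitalDensity (Φm m) x) * χm m x ^ 2 ∂μ) atTop
        (𝓝 (∫ x, vxc (orbitalDensity Φ x) * χ x ^ 2 ∂μ))) := by
  have h2p : 0 < 2 * p := by linarith
  refine ⟨fun hp₃ ρ ψ hρ hρ_int hψ₂ hψ₆ => ?_, fun n Φm Φ χm χ hΦm hΦ hχm₂ hχm hχ₂ hχ hΦ_lim
    hχ₂_lim hχ_lim => ?_⟩
  · have hψ₃ (x : α) : |ψ x ^ 2| ^ (3 : ℝ) = ψ x ^ 6 := by
      rw [abs_of_nonneg (sq_nonneg _), rpow_ofNat, ← pow_mul]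
    rw [ge_iff_le, neg_mul]
    exact neg_le_of_abs_le (abs_integral_comp_mul_le_of_growth hp hp₃ hvxcGrow hρ hρ_int hψ₂
      (by simpa only [hψ₃] using hψ₆))
  · have htwo : ENNReal.ofReal 2 = 2 := ENNReal.ofReal_ofNat 2
    refine tendsto_integral_comp_orbitalDensity_mul_sq hp hvxcCont hvxcGrow hΦm hΦ hχm₂ hχm hχ₂ hχ
      (fun i => tendsto_eLpNorm_sub_of_tendsto_realLpNorm h2p (hΦm · i) (hΦ i) (hΦ_lim i)) ?_
      (tendsto_eLpNorm_sub_of_tendsto_realLpNorm h2p hχm hχ hχ_lim)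
    rw [← htwo] at hχm₂ hχ₂ ⊢
    exact tendsto_eLpNorm_sub_of_tendsto_realLpNorm two_pos hχm₂ hχ₂ hχ₂_lim

/-- if `|v_xc(t)| ≤ c_xc(1 + t^{p-1})` with `p ∈ [1,5/3)`, then for
nonnegative `ρ ∈ Lᵖ` and `ρ_ψ = |ψ|² ∈ L¹ ∩ L³`,
`∫ v_xc(ρ) ρ_ψ ≥ -c_xc (‖ρ_ψ‖₁ + ‖ρ‖_p^{p-1} ‖ρ_ψ‖₁^{(3-p)/(2p)} ‖ρ_ψ‖₃^{3(p-1)/(2p)})`,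
and `(Φ,χ) ↦ ∫ v_xc(ρ)|χ|²` (with `ρ = 2∑|φₖ|²`) is continuous on
`L^{2p}(ℝ³)ⁿ × (L²(ℝ³) ∩ L^{2p}(ℝ³))`. -/
theorem vxc_term_bound_and_continuity
    (vxc : ℝ → ℝ) (c_xc p : ℝ)
    (hp : 1 ≤ p ∧ p < 5/3) (hcxc : 0 < c_xc)
    (hvxcCont : ContinuousOn vxc (Set.Ici 0))
    (hvxcGrow : ∀ t ≥ (0:ℝ), |vxc t| ≤ c_xc * (1 + t ^ (p - 1))) :
    -- the lower bound
    (∀ (ρ : E3 → ℝ) (ψ : E3 → ℝ), (∀ x, 0 ≤ ρ x) →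
      Integrable (fun x => |ρ x| ^ p) →
      Integrable (fun x => (ψ x) ^ 2) → Integrable (fun x => (ψ x) ^ 6) →
      (∫ x, vxc (ρ x) * (ψ x) ^ 2) ≥
        -c_xc * (lpnorm 1 (fun x => (ψ x)^2)
          + lpnorm p ρ ^ (p - 1)
            * lpnorm 1 (fun x => (ψ x)^2) ^ ((3 - p)/(2*p))
            * lpnorm 3 (fun x => (ψ x)^2) ^ (3*(p-1)/(2*p)))) ∧
    -- continuity on L^{2p}ⁿ × (L² ∩ L^{2p})
    (∀ (n : ℕ) (Φm : ℕ → Fin n → E3 → ℝ) (Φ : Fin n → E3 → ℝ)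
        (χm : ℕ → E3 → ℝ) (χ : E3 → ℝ),
      (∀ m i, MemLp (Φm m i) (ENNReal.ofReal (2*p)) (volume : Measure E3)) →
      (∀ i, MemLp (Φ i) (ENNReal.ofReal (2*p)) (volume : Measure E3)) →
      (∀ m, MemLp (χm m) 2 (volume : Measure E3)) →
      (∀ m, MemLp (χm m) (ENNReal.ofReal (2*p)) (volume : Measure E3)) →
      MemLp χ 2 (volume : Measure E3) →
      MemLp χ (ENNReal.ofReal (2*p)) (volume : Measure E3) →
      (∀ i, Tendsto (fun m => lpnorm (2*p) (fun x => Φm m i x - Φ i x)) atTop (nhds 0)) →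
      Tendsto (fun m => lpnorm 2 (fun x => χm m x - χ x)) atTop (nhds 0) →
      Tendsto (fun m => lpnorm (2*p) (fun x => χm m x - χ x)) atTop (nhds 0) →
      Tendsto (fun m => ∫ x, vxc (dens (Φm m) x) * (χm m x) ^ 2) atTop
        (nhds (∫ x, vxc (dens Φ x) * (χ x) ^ 2))) := by
  have h := vxc_term_bound_and_continuity_general (volume : Measure E3) vxc c_xc p hp.1 hvxcCont
    hvxcGrow
  exact ⟨h.1 (by linarith [hp.2]), h.2⟩
end
end

section
/- The PW92 correlation energy per unit volume e_c(ρ) = ρ·f(r_s)·log(1 + 1/g(r_s)), where r_s = (3/(4πρ))^{1/3}, f(r_s) = −2A(1 + α₁ r_s), g(r_s) = 2A(β₁ r_s^{1/2} + β₂ r_s + β₃ r_s^{3/2} + β₄ r_s²) with constants A, α₁, β₁, β₂, β₃, β₄ > 0, satisfies: (i) e_c extends continuously to ρ = 0 with e_c(0) = 0, and v_c = de_c/dρ is continuous on [0,∞) with v_c(0) = 0; (ii) there is a constant C with |v_c(ρ)| ≤ C(1 + ρ^{1/6}) for all ρ ≥ 0, so assumption |v_xc| ≤ c(1+ρ^{p−1})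 holds with p = 7/6; (iii) for every q ∈ (4/3, 3/2), limsup_{ρ→0+} e_c(ρ)/ρ^q < 0. -/
/-!
Write `e_c(ρ) = ρ ε(r_s)` with `ε = f log(1 + 1/g)`; since `dr_s/dρ = -r_s/(3ρ)`, this gives
`v_c = ε - r_s ε'/3`. For `x > 0` the bounds `1/(1+x) ≤ log(1 + 1/x)`, `|r f'| ≤ |f|` and
`|r g'| ≤ 2g` yield `|r ε'| ≤ 3|ε|`, so everything about `v_c` follows from the size of `ε`.

The size of `ε` comes from `g ≥ κ r²` alone: `log(1 + y) ≤ y^s/s` for `0 < s ≤ 1` gives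
`log(1 + 1/g) = O(r^(-2s))`, and the two terms of `f`, treated with different `s`, show
`|ε| ≤ C r^(-s)` on all of `(0,∞)` for every `s ∈ (0,1]`, which is `O(ρ^(s/3))`.
Conversely `g = O(r²)` at infinity gives `ε ≤ -c/r`, hence `e_c ≤ -c' ρ^(4/3)` for small `ρ`.
-/

open MeasureTheory Real Filter Set
noncomputable section

/-- Wigner-Seitz radius `r_s = (3/(4πρ))^{1/3}`. -/
def rs (t : ℝ) : ℝ := (3 / (4 * π * t)) ^ ((1:ℝ)/3)

open scoped Topology

section WignerSeitzRadius

variable {t : ℝ}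

lemma rs_pos (ht : 0 < t) : 0 < rs t := by
  unfold rs
  positivity

lemma rs_rpow_neg (ht : 0 ≤ t) (s : ℝ) :
    rs t ^ (-s) = (4 * π / 3) ^ (s / 3) * t ^ (s / 3) := by
  have hbase : 3 / (4 * π * t) = (4 * π / 3 * t)⁻¹ := by
    rw [← inv_div]
    ring
  rw [rs, ← rpow_mul (by positivity), hbase, inv_rpow (by positivity), ← rpow_neg (by positivity),
    mul_rpow (by positivity) ht]
  ring_nf

lemma rs_eq_mul_rpow (ht : 0 ≤ t) :
    rs t = (4 * π / 3) ^ (-(1 / 3) : ℝ) * t ^ (-(1 / 3) : ℝ) := by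
  simpa [neg_div] using rs_rpow_neg ht (-1)

lemma hasDerivAt_rs (ht : 0 < t) : HasDerivAt rs (-rs t / (3 * t)) t := by
  have hpow := (hasDerivAt_rpow_const (p := -(1 / 3)) (Or.inl ht.ne')).const_mul
    ((4 * π / 3) ^ (-(1 / 3) : ℝ))
  have heq : rs =ᶠ[𝓝 t] fun u ↦ (4 * π / 3) ^ (-(1 / 3) : ℝ) * u ^ (-(1 / 3) : ℝ) := by
    filter_upwards [Ioi_mem_nhds ht] with u hu using rs_eq_mul_rpow hu.le
  refine (hpow.congr_of_eventuallyEq heq).congr_deriv ?_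
  rw [rpow_sub_one ht.ne', rs_eq_mul_rpow ht.le]
  field_simp

lemma tendsto_rs_atTop : Tendsto rs (𝓝[>] 0) atTop := by
  refine ((tendsto_rpow_neg_nhdsGT_zero (y := -(1 / 3)) (by norm_num)).const_mul_atTop
    (show 0 < (4 * π / 3) ^ (-(1 / 3) : ℝ) by positivity)).congr' ?_
  filter_upwards [self_mem_nhdsWithin] with t ht using (rs_eq_mul_rpow (le_of_lt ht)).symm

end WignerSeitzRadius

/-- The energy per unit volume `ρ ε(r_s)` belonging to an energy per particle `ε`, a function of the
Wigner-Seitz radius; it is extended by `0` to `ρ ≤ 0`. -/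
def energyPerVolume (ε : ℝ → ℝ) (t : ℝ) : ℝ :=
  if t ≤ 0 then 0 else t * ε (rs t)

/-- The potential `d(ρ ε(r_s))/dρ = ε(r_s) - r_s ε'(r_s)/3` belonging to an energy per particle `ε`,
extended by `0` to `ρ ≤ 0`. -/
def xcPotential (ε : ℝ → ℝ) (t : ℝ) : ℝ :=
  if t ≤ 0 then 0 else ε (rs t) - rs t * deriv ε (rs t) / 3

section EnergyPerParticle

variable {ε : ℝ → ℝ} {t C K s : ℝ}

lemma energyPerVolume_of_pos (ht : 0 < t) : energyPerVolume ε t = t * ε (rs t) :=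
  if_neg ht.not_ge

lemma energyPerVolume_zero : energyPerVolume ε 0 = 0 :=
  if_pos le_rfl

lemma xcPotential_of_pos (ht : 0 < t) :
    xcPotential ε t = ε (rs t) - rs t * deriv ε (rs t) / 3 :=
  if_neg ht.not_ge

lemma xcPotential_zero : xcPotential ε 0 = 0 :=
  if_pos le_rfl

lemma hasDerivAt_energyPerVolume (ht : 0 < t) (hε : DifferentiableAt ℝ ε (rs t)) :
    HasDerivAt (energyPerVolume ε) (xcPotential ε t) t := by
  have hmul := (hasDerivAt_id t).mul (hε.hasDerivAt.comp t (hasDerivAt_rs ht))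
  have heq : energyPerVolume ε =ᶠ[𝓝 t] id * (ε ∘ rs) := by
    filter_upwards [Ioi_mem_nhds ht] with u hu using energyPerVolume_of_pos hu
  refine (hmul.congr_of_eventuallyEq heq).congr_deriv ?_
  rw [xcPotential_of_pos ht, id, Function.comp_apply]
  field_simp
  ring

lemma hasDerivWithinAt_energyPerVolume_zero (hε : Tendsto ε atTop (𝓝 0)) :
    HasDerivWithinAt (energyPerVolume ε) 0 (Ici 0) 0 := by
  rw [← hasDerivWithinAt_Ioi_iff_Ici, hasDerivWithinAt_iff_tendsto_slope' self_notMem_Ioi]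
  refine (hε.comp tendsto_rs_atTop).congr' ?_
  filter_upwards [self_mem_nhdsWithin] with t (ht : 0 < t)
  rw [slope_def_field, energyPerVolume_of_pos ht, energyPerVolume_zero, sub_zero, sub_zero,
    mul_div_cancel_left₀ _ ht.ne', Function.comp_apply]

lemma hasDerivWithinAt_energyPerVolume (hε : DifferentiableOn ℝ ε (Ioi 0))
    (hlim : Tendsto ε atTop (𝓝 0)) (ht : 0 ≤ t) :
    HasDerivWithinAt (energyPerVolume ε) (xcPotential ε t) (Ici 0) t := by
  rcases ht.eq_or_lt with rfl | hpos
  · simpa only [xcPotential_zero] using hasDerivWithinAt_energyPerVolume_zero hlim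
  · exact (hasDerivAt_energyPerVolume hpos
      (hε.differentiableAt (Ioi_mem_nhds (rs_pos hpos)))).hasDerivWithinAt

lemma continuousAt_xcPotential (ht : 0 < t) (hε : ContDiffOn ℝ 1 ε (Ioi 0)) :
    ContinuousAt (xcPotential ε) t := by
  have hnhds : Ioi 0 ∈ 𝓝 (rs t) := Ioi_mem_nhds (rs_pos ht)
  have hrs : ContinuousAt rs t := (hasDerivAt_rs ht).continuousAt
  have hval : ContinuousAt (ε ∘ rs) t := (hε.continuousOn.continuousAt hnhds).comp hrs
  have hderiv : ContinuousAt (deriv ε ∘ rs) t :=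
    ((hε.continuousOn_deriv_of_isOpen isOpen_Ioi le_rfl).continuousAt hnhds).comp hrs
  refine (hval.sub ((hrs.mul hderiv).div_const 3)).congr ?_
  filter_upwards [Ioi_mem_nhds ht] with u hu using (xcPotential_of_pos hu).symm

lemma continuousWithinAt_xcPotential_zero (hε : Tendsto ε atTop (𝓝 0))
    (hε' : Tendsto (fun r ↦ r * deriv ε r) atTop (𝓝 0)) :
    ContinuousWithinAt (xcPotential ε) (Ici 0) 0 := by
  rw [← continuousWithinAt_Ioi_iff_Ici, ContinuousWithinAt, xcPotential_zero]
  have hlim : Tendsto (fun r ↦ ε r - r * deriv ε r / 3) atTop (𝓝 0) := by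
    simpa using hε.sub (hε'.div_const 3)
  refine (hlim.comp tendsto_rs_atTop).congr' ?_
  filter_upwards [self_mem_nhdsWithin] with t ht using (xcPotential_of_pos ht).symm

lemma continuousOn_xcPotential (hε : ContDiffOn ℝ 1 ε (Ioi 0)) (hlim : Tendsto ε atTop (𝓝 0))
    (hlim' : Tendsto (fun r ↦ r * deriv ε r) atTop (𝓝 0)) :
    ContinuousOn (xcPotential ε) (Ici 0) := by
  intro t ht
  rcases (mem_Ici.mp ht).eq_or_lt with rfl | hpos
  · exact continuousWithinAt_xcPotential_zero hlim hlim'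
  · exact (continuousAt_xcPotential hpos hε).continuousWithinAt

lemma abs_xcPotential_le (ht : 0 < t) (hε' : |rs t * deriv ε (rs t)| ≤ K * |ε (rs t)|) :
    |xcPotential ε t| ≤ (1 + K / 3) * |ε (rs t)| := by
  rw [xcPotential_of_pos ht]
  calc |ε (rs t) - rs t * deriv ε (rs t) / 3|
      ≤ |ε (rs t)| + |rs t * deriv ε (rs t) / 3| := abs_sub _ _
    _ = |ε (rs t)| + |rs t * deriv ε (rs t)| / 3 := by rw [abs_div, abs_of_pos (zero_lt_three' ℝ)]
    _ ≤ (1 + K / 3) * |ε (rs t)| := by linarith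

lemma abs_xcPotential_le_rpow (hs : 0 < s) (hK : 0 ≤ K) (hε : ∀ r > 0, |ε r| ≤ C * r ^ (-s))
    (hε' : ∀ r > 0, |r * deriv ε r| ≤ K * |ε r|) (ht : 0 ≤ t) :
    |xcPotential ε t| ≤ (1 + K / 3) * C * (4 * π / 3) ^ (s / 3) * t ^ (s / 3) := by
  rcases ht.eq_or_lt with rfl | hpos
  · rw [xcPotential_zero, abs_zero, zero_rpow (by positivity), mul_zero]
  calc |xcPotential ε t|
      ≤ (1 + K / 3) * |ε (rs t)| := abs_xcPotential_le hpos (hε' _ (rs_pos hpos))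
    _ ≤ (1 + K / 3) * (C * rs t ^ (-s)) := by gcongr; exact hε _ (rs_pos hpos)
    _ = (1 + K / 3) * C * (4 * π / 3) ^ (s / 3) * t ^ (s / 3) := by
      rw [rs_rpow_neg ht]
      ring

lemma energyPerVolume_div_rpow_le {c q : ℝ} (hc : 0 ≤ c) (ht : 0 < t) (ht1 : t ≤ 1)
    (hε : ε (rs t) ≤ -c * rs t ^ (-s)) (hq : 1 + s / 3 ≤ q) :
    energyPerVolume ε t / t ^ q ≤ -(c * (4 * π / 3) ^ (s / 3)) := by
  rw [energyPerVolume_of_pos ht, div_le_iff₀ (by positivity)]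
  calc t * ε (rs t)
      ≤ t * (-c * rs t ^ (-s)) := by gcongr
    _ = -(c * (4 * π / 3) ^ (s / 3)) * t ^ (1 + s / 3) := by
      rw [rs_rpow_neg ht.le, rpow_add ht, rpow_one]
      ring
    _ ≤ -(c * (4 * π / 3) ^ (s / 3)) * t ^ q :=
      mul_le_mul_of_nonpos_left (rpow_le_rpow_of_exponent_ge ht ht1 hq)
        (neg_nonpos.mpr (by positivity))

lemma limsup_energyPerVolume_div_rpow_neg {c q : ℝ} (hc : 0 < c)
    (hε : ∀ᶠ r in atTop, ε r ≤ -c * r ^ (-s)) (hq : 1 + s / 3 ≤ q) :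
    limsup (fun t ↦ ((energyPerVolume ε t / t ^ q : ℝ) : EReal)) (𝓝[>] 0) < 0 := by
  have hneg : ((-(c * (4 * π / 3) ^ (s / 3)) : ℝ) : EReal) < 0 :=
    EReal.coe_neg'.mpr (neg_lt_zero.mpr (by positivity))
  refine (limsup_le_of_le (by isBoundedDefault) ?_).trans_lt hneg
  filter_upwards [tendsto_rs_atTop.eventually hε, Ioo_mem_nhdsGT one_pos] with t hεt ht
  exact EReal.coe_le_coe_iff.mpr (energyPerVolume_div_rpow_le hc.le ht.1 ht.2.le hεt hq)

end EnergyPerParticle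

section Logarithm

variable {x y s : ℝ}

lemma log_one_add_one_div_nonneg (hx : 0 < x) : 0 ≤ log (1 + 1 / x) :=
  log_nonneg (le_add_of_nonneg_right (by positivity))

lemma one_div_one_add_le_log (hx : 0 < x) : 1 / (1 + x) ≤ log (1 + 1 / x) := by
  calc 1 / (1 + x) = 1 - (1 + 1 / x)⁻¹ := by field_simp; ring
    _ ≤ log (1 + 1 / x) := one_sub_inv_le_log_of_pos (by positivity)

lemma log_one_add_le_rpow_div (hx : 0 ≤ x) (hs : 0 < s) (hs1 : s ≤ 1) :
    log (1 + x) ≤ x ^ s / s := by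
  rw [le_div_iff₀ hs, mul_comm, ← log_rpow (by positivity)]
  have hlog : log ((1 + x) ^ s) ≤ (1 + x) ^ s - 1 := log_le_sub_one_of_pos (by positivity)
  have hsub : (1 + x) ^ s ≤ 1 ^ s + x ^ s := rpow_add_le_add_rpow zero_le_one hx hs.le hs1
  rw [one_rpow] at hsub
  linarith

lemma log_one_add_one_div_le_rpow (hy : 0 < y) (hyx : y ≤ x) (hs : 0 < s) (hs1 : s ≤ 1) :
    log (1 + 1 / x) ≤ y ^ (-s) / s := by
  have hx : 0 < x := hy.trans_le hyx
  calc log (1 + 1 / x) ≤ log (1 + 1 / y) := by gcongr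
    _ ≤ (1 / y) ^ s / s := log_one_add_le_rpow_div (by positivity) hs hs1
    _ = y ^ (-s) / s := by rw [one_div, inv_rpow hy.le, rpow_neg hy.le]

end Logarithm

/-- The energy per particle `ε = f log(1 + 1/g)`, the form of the Perdew-Wang parametrization; it is
meaningful where `g > 0`. -/
def logEnergy (f g : ℝ → ℝ) (r : ℝ) : ℝ :=
  f r * log (1 + 1 / g r)

section LogEnergy

variable {f g : ℝ → ℝ} {r a b : ℝ}

lemma hasDerivAt_logEnergy {f' g' : ℝ} (hf : HasDerivAt f f' r) (hg : HasDerivAt g g' r)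
    (hpos : 0 < g r) :
    HasDerivAt (logEnergy f g)
      (f' * log (1 + 1 / g r) - f r * (g' / (g r * (g r + 1)))) r := by
  have hlog : HasDerivAt (fun r ↦ log (1 + 1 / g r)) (-(g' / (g r * (g r + 1)))) r := by
    simp only [one_div]
    have hone : 0 < 1 + (g r)⁻¹ := add_pos one_pos (inv_pos.mpr hpos)
    refine (((hg.inv hpos.ne').const_add 1).log hone.ne').congr_deriv ?_
    simp only [Pi.inv_apply]
    field_simp
  exact (hf.mul hlog).congr_deriv (by ring)

lemma contDiffOn_logEnergy {n : WithTop ℕ∞} {S : Set ℝ} (hf : ContDiffOn ℝ n f S)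
    (hg : ContDiffOn ℝ n g S) (hpos : ∀ r ∈ S, 0 < g r) : ContDiffOn ℝ n (logEnergy f g) S := by
  refine hf.mul (ContDiffOn.log (contDiffOn_const.add
    (contDiffOn_const.div hg fun r hr ↦ (hpos r hr).ne')) fun r hr ↦ ?_)
  have := hpos r hr
  positivity

lemma abs_logEnergy (hpos : 0 < g r) : |logEnergy f g r| = |f r| * log (1 + 1 / g r) := by
  rw [logEnergy, abs_mul, abs_of_nonneg (log_one_add_one_div_nonneg hpos)]

lemma abs_mul_deriv_logEnergy_le (hf : DifferentiableAt ℝ f r) (hg : DifferentiableAt ℝ g r)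
    (hpos : 0 < g r) (hf' : |r * deriv f r| ≤ a * |f r|) (hg' : |r * deriv g r| ≤ b * g r) :
    |r * deriv (logEnergy f g) r| ≤ (a + b) * |logEnergy f g r| := by
  have hb : 0 ≤ b := nonneg_of_mul_nonneg_left ((abs_nonneg _).trans hg') hpos
  set L := log (1 + 1 / g r)
  have hL : 0 ≤ L := log_one_add_one_div_nonneg hpos
  have hquot : |r * deriv g r / (g r * (g r + 1))| ≤ b * L := by
    rw [abs_div, abs_of_pos (show 0 < g r * (g r + 1) by positivity)]
    calc |r * deriv g r| / (g r * (g r + 1))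
        ≤ b * g r / (g r * (g r + 1)) := by gcongr
      _ = b * (1 / (1 + g r)) := by field_simp; ring
      _ ≤ b * L := by gcongr; exact one_div_one_add_le_log hpos
  rw [(hasDerivAt_logEnergy hf.hasDerivAt hg.hasDerivAt hpos).deriv, abs_logEnergy hpos]
  calc |r * (deriv f r * L - f r * (deriv g r / (g r * (g r + 1))))|
      = |r * deriv f r * L - f r * (r * deriv g r / (g r * (g r + 1)))| := by ring_nf
    _ ≤ |r * deriv f r * L| + |f r * (r * deriv g r / (g r * (g r + 1)))| := abs_sub _ _
    _ = |r * deriv f r| * L + |f r| * |r * deriv g r / (g r * (g r + 1))| := by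
      rw [abs_mul _ L, abs_of_nonneg hL, abs_mul (f r)]
    _ ≤ a * |f r| * L + |f r| * (b * L) := by gcongr
    _ = (a + b) * (|f r| * L) := by ring

end LogEnergy

/-- The prefactor `f(r) = -2A(1 + α₁r)` of the PW92 parametrization. -/
def pw92F (A a1 r : ℝ) : ℝ :=
  -2 * A * (1 + a1 * r)

/-- The function `g(r) = 2A(β₁r^{1/2} + β₂r + β₃r^{3/2} + β₄r²)` of the PW92 parametrization. -/
def pw92G (A b1 b2 b3 b4 r : ℝ) : ℝ :=
  2 * A * (b1 * r ^ ((1 : ℝ) / 2) + b2 * r + b3 * r ^ ((3 : ℝ) / 2) + b4 * r ^ (2 : ℝ))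

/-- The PW92 correlation energy per particle `f log(1 + 1/g)`. -/
def pw92Energy (A a1 b1 b2 b3 b4 : ℝ) : ℝ → ℝ :=
  logEnergy (pw92F A a1) (pw92G A b1 b2 b3 b4)

section PW92

variable {A a1 b1 b2 b3 b4 r s : ℝ}

lemma contDiff_pw92F {n : WithTop ℕ∞} : ContDiff ℝ n (pw92F A a1) := by
  unfold pw92F
  fun_prop

lemma contDiffOn_pw92G {n : WithTop ℕ∞} : ContDiffOn ℝ n (pw92G A b1 b2 b3 b4) (Ioi 0) := by
  have hpow (p : ℝ) : ContDiffOn ℝ n (fun r : ℝ ↦ r ^ p) (Ioi 0) :=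
    contDiffOn_id.rpow_const_of_ne fun r hr ↦ ne_of_gt hr
  exact contDiffOn_const.mul ((((contDiffOn_const.mul (hpow _)).add
    (contDiffOn_const.mul contDiffOn_id)).add (contDiffOn_const.mul (hpow _))).add
    (contDiffOn_const.mul (hpow _)))

lemma hasDerivAt_pw92F : HasDerivAt (pw92F A a1) (-2 * A * a1) r :=
  ((((hasDerivAt_id r).const_mul a1).const_add 1).const_mul (-2 * A)).congr_deriv (by ring)

lemma hasDerivAt_pw92G (hr : 0 < r) :
    HasDerivAt (pw92G A b1 b2 b3 b4)
      (2 * A * (b1 * (1 / 2 * r ^ ((1 : ℝ) / 2)) + b2 * r + b3 * (3 / 2 * r ^ ((3 : ℝ) / 2))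
        + b4 * (2 * r ^ (2 : ℝ))) / r) r := by
  have hpow (p : ℝ) : HasDerivAt (fun y : ℝ ↦ y ^ p) (p * (r ^ p / r)) r := by
    simpa only [rpow_sub_one hr.ne'] using hasDerivAt_rpow_const (p := p) (Or.inl hr.ne')
  refine (((((hpow (1 / 2)).const_mul b1).add ((hasDerivAt_id r).const_mul b2)).add
    ((hpow (3 / 2)).const_mul b3)).add ((hpow 2).const_mul b4)).const_mul (2 * A)
    |>.congr_deriv ?_
  field_simp

lemma abs_pw92F (hA : 0 ≤ A) (ha1 : 0 ≤ a1) (hr : 0 ≤ r) :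
    |pw92F A a1 r| = 2 * A * (1 + a1 * r) := by
  rw [pw92F, neg_mul, neg_mul, abs_neg, abs_of_nonneg (by positivity)]

lemma abs_mul_deriv_pw92F_le (hA : 0 ≤ A) (ha1 : 0 ≤ a1) (hr : 0 ≤ r) :
    |r * deriv (pw92F A a1) r| ≤ 1 * |pw92F A a1 r| := by
  rw [hasDerivAt_pw92F.deriv, abs_pw92F hA ha1 hr, neg_mul, neg_mul, mul_neg, abs_neg,
    abs_of_nonneg (by positivity)]
  linarith

lemma le_pw92G (hA : 0 ≤ A) (hb1 : 0 ≤ b1) (hb2 : 0 ≤ b2) (hb3 : 0 ≤ b3) (hr : 0 ≤ r) :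
    2 * A * b4 * r ^ (2 : ℝ) ≤ pw92G A b1 b2 b3 b4 r := by
  have : 0 ≤ 2 * A * (b1 * r ^ ((1 : ℝ) / 2) + b2 * r + b3 * r ^ ((3 : ℝ) / 2)) := by positivity
  unfold pw92G
  linarith

lemma pw92G_pos (hA : 0 < A) (hb1 : 0 ≤ b1) (hb2 : 0 ≤ b2) (hb3 : 0 ≤ b3) (hb4 : 0 < b4)
    (hr : 0 < r) : 0 < pw92G A b1 b2 b3 b4 r :=
  lt_of_lt_of_le (by positivity) (le_pw92G hA.le hb1 hb2 hb3 hr.le)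

lemma pw92G_le (hA : 0 ≤ A) (hb1 : 0 ≤ b1) (hb2 : 0 ≤ b2) (hb3 : 0 ≤ b3) (hr : 1 ≤ r) :
    pw92G A b1 b2 b3 b4 r ≤ 2 * A * (b1 + b2 + b3 + b4) * r ^ (2 : ℝ) := by
  have hone : r ≤ r ^ (2 : ℝ) := self_le_rpow_of_one_le hr one_le_two
  calc pw92G A b1 b2 b3 b4 r
      ≤ 2 * A * (b1 * r ^ (2 : ℝ) + b2 * r ^ (2 : ℝ) + b3 * r ^ (2 : ℝ) + b4 * r ^ (2 : ℝ)) := by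
        unfold pw92G
        gcongr <;> first | exact hr | norm_num
    _ = 2 * A * (b1 + b2 + b3 + b4) * r ^ (2 : ℝ) := by ring

lemma abs_mul_deriv_pw92G_le (hA : 0 ≤ A) (hb1 : 0 ≤ b1) (hb2 : 0 ≤ b2) (hb3 : 0 ≤ b3)
    (hb4 : 0 ≤ b4) (hr : 0 < r) :
    |r * deriv (pw92G A b1 b2 b3 b4) r| ≤ 2 * pw92G A b1 b2 b3 b4 r := by
  rw [(hasDerivAt_pw92G hr).deriv, mul_div_cancel₀ _ hr.ne', abs_of_nonneg (by positivity)]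
  have : 0 ≤ A * (3 * (b1 * r ^ ((1 : ℝ) / 2)) + 2 * (b2 * r) + b3 * r ^ ((3 : ℝ) / 2)) := by
    positivity
  unfold pw92G
  linarith

lemma contDiffOn_pw92Energy {n : WithTop ℕ∞} (hA : 0 < A) (hb1 : 0 ≤ b1) (hb2 : 0 ≤ b2)
    (hb3 : 0 ≤ b3) (hb4 : 0 < b4) : ContDiffOn ℝ n (pw92Energy A a1 b1 b2 b3 b4) (Ioi 0) :=
  contDiffOn_logEnergy contDiff_pw92F.contDiffOn contDiffOn_pw92G
    fun _ hr ↦ pw92G_pos hA hb1 hb2 hb3 hb4 hr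

lemma abs_mul_deriv_pw92Energy_le (hA : 0 < A) (ha1 : 0 ≤ a1) (hb1 : 0 ≤ b1) (hb2 : 0 ≤ b2)
    (hb3 : 0 ≤ b3) (hb4 : 0 < b4) (hr : 0 < r) :
    |r * deriv (pw92Energy A a1 b1 b2 b3 b4) r| ≤ 3 * |pw92Energy A a1 b1 b2 b3 b4 r| :=
  (abs_mul_deriv_logEnergy_le hasDerivAt_pw92F.differentiableAt
    (hasDerivAt_pw92G hr).differentiableAt (pw92G_pos hA hb1 hb2 hb3 hb4 hr)
    (abs_mul_deriv_pw92F_le hA.le ha1 hr.le)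
    (abs_mul_deriv_pw92G_le hA.le hb1 hb2 hb3 hb4.le hr)).trans_eq (by norm_num [pw92Energy])

lemma log_one_add_one_div_pw92G_le (hA : 0 < A) (hb1 : 0 ≤ b1) (hb2 : 0 ≤ b2) (hb3 : 0 ≤ b3)
    (hb4 : 0 < b4) (hs : 0 < s) (hs2 : s ≤ 2) (hr : 0 < r) :
    log (1 + 1 / pw92G A b1 b2 b3 b4 r) ≤ 2 / s * (2 * A * b4) ^ (-(s / 2)) * r ^ (-s) := by
  calc log (1 + 1 / pw92G A b1 b2 b3 b4 r)
      ≤ (2 * A * b4 * r ^ (2 : ℝ)) ^ (-(s / 2)) / (s / 2) :=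
        log_one_add_one_div_le_rpow (by positivity) (le_pw92G hA.le hb1 hb2 hb3 hr.le)
          (by positivity) (by linarith)
    _ = 2 / s * (2 * A * b4) ^ (-(s / 2)) * r ^ (-s) := by
      rw [mul_rpow (by positivity) (by positivity), ← rpow_mul hr.le]
      ring_nf

lemma exists_abs_pw92Energy_le_rpow (hA : 0 < A) (ha1 : 0 ≤ a1) (hb1 : 0 ≤ b1) (hb2 : 0 ≤ b2)
    (hb3 : 0 ≤ b3) (hb4 : 0 < b4) (hs : 0 < s) (hs1 : s ≤ 1) :
    ∃ C > 0, ∀ r > 0, |pw92Energy A a1 b1 b2 b3 b4 r| ≤ C * r ^ (-s) := by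
  set C₀ := 2 / s * (2 * A * b4) ^ (-(s / 2))
  set C₁ := 2 / (1 + s) * (2 * A * b4) ^ (-((1 + s) / 2))
  refine ⟨2 * A * (C₀ + a1 * C₁), by positivity, fun r hr ↦ ?_⟩
  have hconst := log_one_add_one_div_pw92G_le hA hb1 hb2 hb3 hb4 hs (by linarith) hr
  have hlinear := log_one_add_one_div_pw92G_le hA hb1 hb2 hb3 hb4
    (show 0 < 1 + s by linarith) (by linarith) hr
  rw [pw92Energy, abs_logEnergy (pw92G_pos hA hb1 hb2 hb3 hb4 hr), abs_pw92F hA.le ha1 hr.le]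
  set L := log (1 + 1 / pw92G A b1 b2 b3 b4 r)
  calc 2 * A * (1 + a1 * r) * L = 2 * A * (L + a1 * (r * L)) := by ring
    _ ≤ 2 * A * (C₀ * r ^ (-s) + a1 * (r * (C₁ * r ^ (-(1 + s))))) := by gcongr
    _ = 2 * A * (C₀ + a1 * C₁) * r ^ (-s) := by
      rw [neg_add, rpow_add hr, rpow_neg_one]
      field_simp

lemma exists_pw92Energy_le_neg (hA : 0 < A) (ha1 : 0 < a1) (hb1 : 0 ≤ b1) (hb2 : 0 ≤ b2)
    (hb3 : 0 ≤ b3) (hb4 : 0 < b4) :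
    ∃ c > 0, ∀ r ≥ 1, pw92Energy A a1 b1 b2 b3 b4 r ≤ -c * r ^ (-1 : ℝ) := by
  set K := 1 + 2 * A * (b1 + b2 + b3 + b4)
  refine ⟨2 * A * a1 / K, by positivity, fun r hr ↦ ?_⟩
  have hr0 : 0 < r := one_pos.trans_le hr
  have hg := pw92G_pos hA hb1 hb2 hb3 hb4 hr0
  have hlog : 1 / (K * r ^ (2 : ℝ)) ≤ log (1 + 1 / pw92G A b1 b2 b3 b4 r) := by
    refine le_trans ?_ (one_div_one_add_le_log hg)
    gcongr
    linarith [pw92G_le (b4 := b4) hA.le hb1 hb2 hb3 hr, one_le_rpow hr zero_le_two]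
  calc pw92Energy A a1 b1 b2 b3 b4 r
      = -(2 * A * (1 + a1 * r) * log (1 + 1 / pw92G A b1 b2 b3 b4 r)) := by
        rw [pw92Energy, logEnergy, pw92F]
        ring
    _ ≤ -(2 * A * (a1 * r) * (1 / (K * r ^ (2 : ℝ)))) := by gcongr; linarith
    _ = -(2 * A * a1 / K) * r ^ (-1 : ℝ) := by
      rw [rpow_neg_one, rpow_two]
      field_simp

lemma tendsto_pw92Energy_atTop (hA : 0 < A) (ha1 : 0 ≤ a1) (hb1 : 0 ≤ b1) (hb2 : 0 ≤ b2)
    (hb3 : 0 ≤ b3) (hb4 : 0 < b4) : Tendsto (pw92Energy A a1 b1 b2 b3 b4) atTop (𝓝 0) := by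
  obtain ⟨C, -, hC⟩ := exists_abs_pw92Energy_le_rpow hA ha1 hb1 hb2 hb3 hb4 one_pos le_rfl
  refine squeeze_zero_norm' ?_ (by simpa using (tendsto_rpow_neg_atTop one_pos).const_mul C)
  filter_upwards [eventually_gt_atTop 0] with r hr using hC r hr

lemma tendsto_mul_deriv_pw92Energy_atTop (hA : 0 < A) (ha1 : 0 ≤ a1) (hb1 : 0 ≤ b1)
    (hb2 : 0 ≤ b2) (hb3 : 0 ≤ b3) (hb4 : 0 < b4) :
    Tendsto (fun r ↦ r * deriv (pw92Energy A a1 b1 b2 b3 b4) r) atTop (𝓝 0) := by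
  refine squeeze_zero_norm' ?_ (by
    simpa using (tendsto_pw92Energy_atTop hA ha1 hb1 hb2 hb3 hb4).abs.const_mul 3)
  filter_upwards [eventually_gt_atTop 0] with r hr using
    abs_mul_deriv_pw92Energy_le hA ha1 hb1 hb2 hb3 hb4 hr

lemma exists_abs_xcPotential_pw92Energy_le_rpow (hA : 0 < A) (ha1 : 0 ≤ a1) (hb1 : 0 ≤ b1)
    (hb2 : 0 ≤ b2) (hb3 : 0 ≤ b3) (hb4 : 0 < b4) (hs : 0 < s) (hs3 : s ≤ 1 / 3) :
    ∃ C > 0, ∀ t ≥ 0, |xcPotential (pw92Energy A a1 b1 b2 b3 b4) t| ≤ C * t ^ s := by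
  obtain ⟨C, hC, hε⟩ := exists_abs_pw92Energy_le_rpow hA ha1 hb1 hb2 hb3 hb4
    (show 0 < 3 * s by positivity) (by linarith)
  refine ⟨(1 + 3 / 3) * C * (4 * π / 3) ^ (3 * s / 3), by positivity, fun t ht ↦ ?_⟩
  simpa only [mul_div_cancel_left₀ s (three_ne_zero' ℝ)] using
    abs_xcPotential_le_rpow (by positivity) zero_le_three hε
      (fun r hr ↦ abs_mul_deriv_pw92Energy_le hA ha1 hb1 hb2 hb3 hb4 hr) ht

lemma limsup_energyPerVolume_pw92Energy_div_rpow_neg {q : ℝ} (hA : 0 < A) (ha1 : 0 < a1)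
    (hb1 : 0 ≤ b1) (hb2 : 0 ≤ b2) (hb3 : 0 ≤ b3) (hb4 : 0 < b4) (hq : 4 / 3 ≤ q) :
    limsup (fun t ↦ ((energyPerVolume (pw92Energy A a1 b1 b2 b3 b4) t / t ^ q : ℝ) : EReal))
      (𝓝[>] 0) < 0 := by
  obtain ⟨c, hc, hε⟩ := exists_pw92Energy_le_neg hA ha1 hb1 hb2 hb3 hb4
  refine limsup_energyPerVolume_div_rpow_neg hc ?_ (show 1 + (1 : ℝ) / 3 ≤ q by linarith)
  filter_upwards [eventually_ge_atTop 1] with r hr using hε r hr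

end PW92

theorem pw92_satisfies_assumptions_general
    (A a1 b1 b2 b3 b4 : ℝ)
    (hA : 0 < A) (ha1 : 0 < a1) (hb1 : 0 ≤ b1) (hb2 : 0 ≤ b2)
    (hb3 : 0 ≤ b3) (hb4 : 0 < b4)
    (f g ec : ℝ → ℝ)
    (hf : f = fun r => -2 * A * (1 + a1 * r))
    (hg : g = fun r => 2 * A * (b1 * r ^ ((1 : ℝ) / 2) + b2 * r + b3 * r ^ ((3 : ℝ) / 2)
      + b4 * r ^ (2 : ℝ)))
    (hec : ec = fun t => if t ≤ 0 then 0
      else t * f (rs t) * Real.log (1 + 1 / g (rs t))) :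
    (ec 0 = 0 ∧ ContinuousOn ec (Set.Ici 0) ∧
      ∃ vc : ℝ → ℝ, vc 0 = 0 ∧ ContinuousOn vc (Set.Ici 0) ∧
        (∀ t ∈ Set.Ici (0 : ℝ), HasDerivWithinAt ec (vc t) (Set.Ici 0) t) ∧
        (∀ s : ℝ, 0 < s → s ≤ 1 / 3 → ∃ C : ℝ, 0 < C ∧ ∀ t ≥ (0 : ℝ), |vc t| ≤ C * t ^ s)) ∧
    (∀ q : ℝ, 4 / 3 ≤ q →
      Filter.limsup (fun t => ((ec t / t ^ q : ℝ) : EReal))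
        (nhdsWithin 0 (Set.Ioi 0)) < 0) := by
  have hec' : ec = energyPerVolume (pw92Energy A a1 b1 b2 b3 b4) := by
    funext t
    simp only [hec, hf, hg, energyPerVolume, pw92Energy, logEnergy, pw92F, pw92G, mul_assoc]
  subst hec'
  have hε : ContDiffOn ℝ 1 (pw92Energy A a1 b1 b2 b3 b4) (Ioi 0) :=
    contDiffOn_pw92Energy hA hb1 hb2 hb3 hb4
  have hlim := tendsto_pw92Energy_atTop hA ha1.le hb1 hb2 hb3 hb4
  have hderiv : ∀ t ∈ Ici (0 : ℝ), HasDerivWithinAt (energyPerVolume (pw92Energy A a1 b1 b2 b3 b4))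
      (xcPotential (pw92Energy A a1 b1 b2 b3 b4) t) (Ici 0) t :=
    fun t ht ↦ hasDerivWithinAt_energyPerVolume (hε.differentiableOn one_ne_zero) hlim ht
  exact ⟨⟨energyPerVolume_zero, fun t ht ↦ (hderiv t ht).continuousWithinAt,
    xcPotential (pw92Energy A a1 b1 b2 b3 b4), xcPotential_zero,
    continuousOn_xcPotential hε hlim
      (tendsto_mul_deriv_pw92Energy_atTop hA ha1.le hb1 hb2 hb3 hb4),
    hderiv, fun s hs hs3 ↦
      exists_abs_xcPotential_pw92Energy_le_rpow hA ha1.le hb1 hb2 hb3 hb4 hs hs3⟩,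
    fun q hq ↦ limsup_energyPerVolume_pw92Energy_div_rpow_neg hA ha1 hb1 hb2 hb3 hb4 hq⟩

/-- the PW92 correlation energy per unit volume
`e_c(ρ) = ρ f(r_s) log(1 + 1/g(r_s))` with `f(r) = -2A(1+α₁r)`,
`g(r) = 2A(β₁r^{1/2} + β₂r + β₃r^{3/2} + β₄r²)` and positive constants satisfies:
(i) `e_c` extends continuously to `ρ = 0` with `e_c(0) = 0`, and `v_c = de_c/dρ` is
continuous on `[0,∞)` with `v_c(0) = 0`;
(ii) `|v_c(ρ)| ≤ C(1 + ρ^{1/6})`, i.e. the growth assumption holds with `p = 7/6`;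
(iii) for every `q ∈ (4/3, 3/2)`, `limsup_{ρ→0+} e_c(ρ)/ρ^q < 0`. -/
theorem pw92_satisfies_assumptions
    (A a1 b1 b2 b3 b4 : ℝ)
    (hA : 0 < A) (ha1 : 0 < a1) (hb1 : 0 < b1) (hb2 : 0 < b2)
    (hb3 : 0 < b3) (hb4 : 0 < b4)
    (f g ec : ℝ → ℝ)
    (hf : f = fun r => -2 * A * (1 + a1 * r))
    (hg : g = fun r => 2 * A * (b1 * r ^ ((1:ℝ)/2) + b2 * r + b3 * r ^ ((3:ℝ)/2)
      + b4 * r ^ (2:ℝ)))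
    (hec : ec = fun t => if t ≤ 0 then 0
      else t * f (rs t) * Real.log (1 + 1 / g (rs t))) :
    -- (i) e_c ∈ C¹([0,∞)) with e_c(0) = 0 and v_c(0) = 0, v_c continuous
    (ec 0 = 0 ∧ ContinuousOn ec (Set.Ici 0) ∧
      ∃ vc : ℝ → ℝ, vc 0 = 0 ∧ ContinuousOn vc (Set.Ici 0) ∧
        (∀ t ∈ Set.Ici (0:ℝ), HasDerivWithinAt ec (vc t) (Set.Ici 0) t) ∧
        -- (ii) the growth bound with p = 7/6
        (∃ C : ℝ, 0 < C ∧ ∀ t ≥ (0:ℝ), |vc t| ≤ C * (1 + t ^ ((1:ℝ)/6)))) ∧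
    -- (iii)
    (∀ q : ℝ, 4/3 < q → q < 3/2 →
      Filter.limsup (fun t => ((ec t / t ^ q : ℝ) : EReal))
        (nhdsWithin 0 (Set.Ioi 0)) < 0) := by
  obtain ⟨⟨h0, hcont, vc, hv0, hvcont, hderiv, hgrowth⟩, hlimsup⟩ :=
    pw92_satisfies_assumptions_general A a1 b1 b2 b3 b4 hA ha1 hb1.le hb2.le hb3.le hb4
      f g ec hf hg hec
  obtain ⟨C, hC, hv⟩ := hgrowth (1 / 6) (by norm_num) (by norm_num)
  exact ⟨⟨h0, hcont, vc, hv0, hvcont, hderiv, C, hC, fun t ht ↦ (hv t ht).trans (by gcongr; simp)⟩,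
    fun q hq _ ↦ hlimsup q hq.le⟩
end
end
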